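/- arXiv:2603.09543 — 8 statements merged into one kernel-verified Lean document; each statement's English description precedes it below -/
import Mathlib

section
/- Let E be a real vector space with an ℝ-bilinear bracket [·,·], and let I, J be linear endomorphisms of E with I² = J² = −Id and IJ = −JI. Then for all A,B ∈ E: N_{IJ}(A,B) = (1/2)[N_I(JA,JB) + N_J(IA,IB) + N_I(A,B) + N_J(A,B) − I·N_J(IA,B) − I·N_J(A,IB) − J·N_I(JA,B) − J·N_I(A,JB)]. -/
/-- The Nijenhuis concomitant `N(I,J)` of two endomorphisms with respect to an
ℝ-bilinear bracket `br`. -/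
noncomputable def Nij {E : Type*} [AddCommGroup E] [Module ℝ E]
    (br : E →ₗ[ℝ] E →ₗ[ℝ] E) (I J : Module.End ℝ E) (A B : E) : E :=
  (1 / 2 : ℝ) • (br (I A) (J B) + br (J A) (I B)
    - I (br A (J B)) - I (br (J A) B)
    - J (br A (I B)) - J (br (I A) B)
    + I (J (br A B)) + J (I (br A B)))

/-- Nijenhuis expression for the product `IJ` of two anticommuting
generalized almost complex structures. -/
theorem nijenhuis_of_product
    {E : Type*} [AddCommGroup E] [Module ℝ E]
    (br : E →ₗ[ℝ] E →ₗ[ℝ] E)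
    (I J : Module.End ℝ E)
    (hI : I * I = -1) (hJ : J * J = -1) (hIJ : I * J = -(J * I)) :
    ∀ A B : E, Nij br (I * J) (I * J) A B =
      (1 / 2 : ℝ) • (Nij br I I (J A) (J B) + Nij br J J (I A) (I B)
        + Nij br I I A B + Nij br J J A B
        - I (Nij br J J (I A) B) - I (Nij br J J A (I B))
        - J (Nij br I I (J A) B) - J (Nij br I I A (J B))) := by
  intro A B
  have h1 : ∀ x, I (I x) = -x := fun x => by
    simpa using LinearMap.congr_fun hI x
  have h2 : ∀ x, J (J x) = -x := fun x => by
    simpa using LinearMap.congr_fun hJ x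
  have h3 : ∀ x, J (I x) = -I (J x) := fun x => by
    have h := LinearMap.congr_fun hIJ x
    simp only [Module.End.mul_apply, LinearMap.neg_apply] at h
    rw [h, neg_neg]
  simp only [Nij, Module.End.mul_apply, map_smul, map_add, map_sub, map_neg,
    LinearMap.neg_apply, h1, h2, h3, neg_neg]
  module
end

section
/- Let E be a real vector space with an ℝ-bilinear bracket [·,·], and let I, J be linear endomorphisms of E with I² = J² = −Id and IJ = −JI. Then for all A,B ∈ E: N(I,J)(A,B) = (1/2)[−N_{IJ}(JA,IB) + IJ·(N_I(A,B) − N_J(A,B))]. -/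
/-- mixed Nijenhuis expression for two anticommuting generalized
almost complex structures. -/
theorem mixed_nijenhuis_expression
    {E : Type*} [AddCommGroup E] [Module ℝ E]
    (br : E →ₗ[ℝ] E →ₗ[ℝ] E)
    (I J : Module.End ℝ E)
    (hI : I * I = -1) (hJ : J * J = -1) (hIJ : I * J = -(J * I)) :
    ∀ A B : E, Nij br I J A B =
      (1 / 2 : ℝ) • (-(Nij br (I * J) (I * J) (J A) (I B))
        + I (J (Nij br I I A B - Nij br J J A B))) := by
  have hI' : ∀ x, I (I x) = -x := fun x => by
    simpa using LinearMap.congr_fun hI x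
  have hJ' : ∀ x, J (J x) = -x := fun x => by
    simpa using LinearMap.congr_fun hJ x
  have hJI : ∀ x, J (I x) = -I (J x) := fun x => by
    have h := LinearMap.congr_fun hIJ x
    simp only [Module.End.mul_apply, LinearMap.neg_apply] at h
    rw [h, neg_neg]
  intro A B
  simp only [Nij, Module.End.mul_apply, map_add, map_sub, map_neg, map_smul, hI', hJ', hJI,
    LinearMap.neg_apply, neg_neg]
  module
end

section
/- Let E be a real vector space with an ℝ-bilinear bracket [·,·], and let I, J be linear endomorphisms of E with I² = J² = −Id, IJ = −JI, N_I = 0 and N_J = 0. Then N_{IJ} = 0, i.e. the endomorphism IJ (which satisfies (IJ)² = −Id) has vanishing Nijenhuis tensor. -/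
/-- if two anticommuting generalized complex structures are
integrable, then so is their product `IJ`. -/
theorem nijenhuis_product_vanishes
    {E : Type*} [AddCommGroup E] [Module ℝ E]
    (br : E →ₗ[ℝ] E →ₗ[ℝ] E)
    (I J : Module.End ℝ E)
    (hI : I * I = -1) (hJ : J * J = -1) (hIJ : I * J = -(J * I))
    (hNI : ∀ A B : E, Nij br I I A B = 0)
    (hNJ : ∀ A B : E, Nij br J J A B = 0) :
    (I * J) * (I * J) = -1 ∧ ∀ A B : E, Nij br (I * J) (I * J) A B = 0 := by
  have eI : ∀ x, I (I x) = -x := fun x => by simpa using LinearMap.congr_fun hI x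
  have eJ : ∀ x, J (J x) = -x := fun x => by simpa using LinearMap.congr_fun hJ x
  have eJI : ∀ x, J (I x) = -(I (J x)) := fun x => by
    have := LinearMap.congr_fun hIJ x
    simp only [Module.End.mul_apply, LinearMap.neg_apply] at this
    rw [this, neg_neg]
  refine ⟨?_, ?_⟩
  · ext x
    simp [eI, eJ, eJI]
  intro A B
  have h0 := hNI (I A) (I B)
  have h1 := congrArg I (hNI (J A) (I (J B)))
  have h2 := congrArg (fun x => I (J x)) (hNI A (I (J B)))
  have h3 := congrArg (fun x => I (J x)) (hNI (J A) (I B))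
  have h4 := hNJ A B
  have h5 := hNJ (I A) (I B)
  have h6 := congrArg I (hNJ (J A) (I (J B)))
  have h7 := congrArg I (hNJ (I (J A)) (J B))
  simp only [Nij, Module.End.mul_apply, map_add, map_sub, map_neg, map_smul, map_zero, eI, eJ, eJI, LinearMap.neg_apply, neg_neg] at h0 h1 h2 h3 h4 h5 h6 h7 ⊢
  linear_combination (norm := module) (-1/2 : ℝ) • h0 + (1/2 : ℝ) • h1 + (1/2 : ℝ) • h2 + (1/2 : ℝ) • h3 + (1/2 : ℝ) • h4 + (1/2 : ℝ) • h5 + (-1/2 : ℝ) • h6 + (-1/2 : ℝ) • h7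
end

section
/- Let E be a real vector space with an ℝ-bilinear bracket [·,·], and let I, J be linear endomorphisms of E with I² = J² = −Id, IJ = −JI, N_I = 0 and N_J = 0. Then the mixed Nijenhuis concomitant vanishes: N(I,J) = 0. -/
/-- if two anticommuting generalized complex structures are
integrable, then their mixed Nijenhuis concomitant vanishes. -/
theorem mixed_nijenhuis_vanishes_anticommuting
    {E : Type*} [AddCommGroup E] [Module ℝ E]
    (br : E →ₗ[ℝ] E →ₗ[ℝ] E)
    (I J : Module.End ℝ E)
    (hI : I * I = -1) (hJ : J * J = -1) (hIJ : I * J = -(J * I))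
    (hNI : ∀ A B : E, Nij br I I A B = 0)
    (hNJ : ∀ A B : E, Nij br J J A B = 0) :
    ∀ A B : E, Nij br I J A B = 0 := by
  have hI' : ∀ x, I (I x) = -x := fun x => by simpa using LinearMap.congr_fun hI x
  have hJ' : ∀ x, J (J x) = -x := fun x => by simpa using LinearMap.congr_fun hJ x
  have hK : ∀ x, J (I x) = -I (J x) := fun x => by
    have h := LinearMap.congr_fun hIJ x
    simp only [Module.End.mul_apply, LinearMap.neg_apply] at h
    rw [h, neg_neg]
  intro A B
  have h1 := hNI A (I (J B))
  have h2 := hNI (J A) (I B)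
  have h3 := congrArg J (hNI A (I B))
  have h4 := congrArg J (hNI (J A) (I (J B)))
  have h5 := hNJ A (I (J B))
  have h6 := hNJ (I A) (J B)
  have h7 := congrArg I (hNJ A (J B))
  have h8 := congrArg I (hNJ (I A) (I (J B)))
  simp only [Nij, hI', hJ', hK, map_neg, map_add, map_sub, map_smul, map_zero,
    LinearMap.neg_apply, neg_neg] at h1 h2 h3 h4 h5 h6 h7 h8 ⊢
  linear_combination (norm := module) (-1/4 : ℝ) • h1 + (-1/4 : ℝ) • h2 + (1/4 : ℝ) • h3
    + (-1/4 : ℝ) • h4 + (1/4 : ℝ) • h5 + (-1/4 : ℝ) • h6 + (1/4 : ℝ) • h7 + (1/4 : ℝ) • h8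
end

section
/- Let E be a real vector space with an ℝ-bilinear bracket [·,·], and let I, J be linear endomorphisms of E with I² = −Id and IJ + JI = 0 (J is an arbitrary endomorphism anticommuting with I). Then for all A,B ∈ E: 2·N(I,IJ)(A,B) = N_I(JA,B) + N_I(A,JB) + 2·I·N(I,J)(A,B). -/
/-- the mixed Nijenhuis identity for `N(I, IJ)` when `I² = -Id` and
`J` anticommutes with `I`. -/
theorem mixed_nijenhuis_I_IJ
    {E : Type*} [AddCommGroup E] [Module ℝ E]
    (br : E →ₗ[ℝ] E →ₗ[ℝ] E)
    (I J : Module.End ℝ E)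
    (hI : I * I = -1) (hIJ : I * J + J * I = 0) :
    ∀ A B : E, (2 : ℝ) • Nij br I (I * J) A B =
      Nij br I I (J A) B + Nij br I I A (J B) + (2 : ℝ) • I (Nij br I J A B) := by
  intro A B
  have h1 : ∀ x, I (I x) = -x := fun x => by
    have := LinearMap.congr_fun hI x
    simpa using this
  have h2 : ∀ x, J (I x) = -I (J x) := fun x => by
    have := LinearMap.congr_fun hIJ x
    rw [eq_neg_iff_add_eq_zero, add_comm]
    simpa using this
  simp only [Nij, Module.End.mul_apply, map_smul, map_add, map_sub, map_neg, h1, h2,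
    LinearMap.neg_apply]
  module
end

section
/- Let (I₁,I₂,I₃) be a rank-3 Clifford triple on a real vector space E, with G = −I₁I₂I₃ and I_i^± = (1/2)(J_i ± I_i). Then E = ker(G − Id) ⊕ ker(G + Id); each I_i^+ maps ker(G − Id) into itself and vanishes on ker(G + Id), each I_i^− maps ker(G + Id) into itself and vanishes on ker(G − Id); and on ker(G − Id) the restrictions of (I₁^+, I₂^+, I₃^+) form a hypercomplex structure: (I_i^+)²A = −A and I_i^+I_j^+A = Σ_k ε_{ijk} I_k^+A for i ≠ j and all A ∈ ker(G − Id); analogously (I₁^−, I₂^−, I₃^−) form a hypercomplex structure on ker(G + Id). -/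
/-- Levi-Civita symbol on `Fin 3` (0-indexed: `eps 0 1 2 = 1`). -/
def eps (i j k : Fin 3) : ℝ :=
  if (i, j, k) = (0, 1, 2) ∨ (i, j, k) = (1, 2, 0) ∨ (i, j, k) = (2, 0, 1) then 1
  else if (i, j, k) = (0, 2, 1) ∨ (i, j, k) = (2, 1, 0) ∨ (i, j, k) = (1, 0, 2) then -1
  else 0

/-- `E` splits as `ker(G - Id) ⊕ ker(G + Id)`; the `I_i^+` preserve the
`+1` eigenspace of `G` and vanish on the `-1` eigenspace (and vice versa for `I_i^-`),
and the restrictions of `(I₁^±, I₂^±, I₃^±)` define hypercomplex structures on the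
respective eigenspaces. -/
theorem clifford_splitting_hypercomplex
    {E : Type*} [AddCommGroup E] [Module ℝ E]
    (I : Fin 3 → Module.End ℝ E)
    (hCl : ∀ i j, I i * I j + I j * I i = if i = j then (-2 : Module.End ℝ E) else 0)
    (J : Fin 3 → Module.End ℝ E)
    (hJ0 : J 0 = I 1 * I 2) (hJ1 : J 1 = I 2 * I 0) (hJ2 : J 2 = I 0 * I 1)
    (G : Module.End ℝ E) (hG : G = -(I 0 * I 1 * I 2))
    (Ip Im : Fin 3 → Module.End ℝ E)
    (hIp : ∀ i, Ip i = (1 / 2 : ℝ) • (J i + I i))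
    (hIm : ∀ i, Im i = (1 / 2 : ℝ) • (J i - I i)) :
    -- the eigenspace decomposition E = ker(G - Id) ⊕ ker(G + Id)
    IsCompl (LinearMap.ker (G - 1)) (LinearMap.ker (G + 1)) ∧
    -- I_i^+ preserves ker(G - Id) and vanishes on ker(G + Id)
    (∀ i, ∀ A ∈ LinearMap.ker (G - 1), Ip i A ∈ LinearMap.ker (G - 1)) ∧
    (∀ i, ∀ A ∈ LinearMap.ker (G + 1), Ip i A = 0) ∧
    -- I_i^- preserves ker(G + Id) and vanishes on ker(G - Id)
    (∀ i, ∀ A ∈ LinearMap.ker (G + 1), Im i A ∈ LinearMap.ker (G + 1)) ∧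
    (∀ i, ∀ A ∈ LinearMap.ker (G - 1), Im i A = 0) ∧
    -- hypercomplex structure on ker(G - Id)
    (∀ i, ∀ A ∈ LinearMap.ker (G - 1), Ip i (Ip i A) = -A) ∧
    (∀ i j, i ≠ j → ∀ A ∈ LinearMap.ker (G - 1),
      Ip i (Ip j A) = ∑ k, eps i j k • Ip k A) ∧
    -- hypercomplex structure on ker(G + Id)
    (∀ i, ∀ A ∈ LinearMap.ker (G + 1), Im i (Im i A) = -A) ∧
    (∀ i j, i ≠ j → ∀ A ∈ LinearMap.ker (G + 1),
      Im i (Im j A) = ∑ k, eps i j k • Im k A) := by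
  have sq : ∀ i x, I i (I i x) = -x := by
    intro i x
    have h := congrArg (fun f : Module.End ℝ E => f x) (hCl i i)
    have h2 : (-2 : Module.End ℝ E) x = (-2 : ℝ) • x := by
      have : (-2 : Module.End ℝ E) = (-2 : ℝ) • (1 : Module.End ℝ E) := by
        rw [neg_smul, ofNat_smul_eq_nsmul, nsmul_eq_mul]; simp
      rw [this]; simp
    simp only [if_true, LinearMap.add_apply, Module.End.mul_apply, h2] at h
    have h3 : (2 : ℝ) • I i (I i x) = (2 : ℝ) • (-x) := by
      rw [two_smul, h]; module
    exact smul_right_injective E (two_ne_zero (α := ℝ)) h3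
  have ac : ∀ i j, i ≠ j → ∀ x, I i (I j x) = -I j (I i x) := by
    intro i j hij x
    have h := congrArg (fun f : Module.End ℝ E => f x) (hCl i j)
    simp only [if_neg hij, LinearMap.add_apply, Module.End.mul_apply, LinearMap.zero_apply] at h
    exact eq_neg_of_add_eq_zero_left h
  have r10 := ac 1 0 (by decide)
  have r20 := ac 2 0 (by decide)
  have r21 := ac 2 1 (by decide)
  have gA : ∀ x, G x = -I 0 (I 1 (I 2 x)) := by intro x; rw [hG]; simp
  have gg : ∀ x, G (G x) = x := by
    intro x; simp only [gA, sq, r10, r20, r21, map_neg, neg_neg]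
  have mp : ∀ x, x ∈ LinearMap.ker (G - 1) ↔ G x = x := by
    intro x; simp [LinearMap.mem_ker, sub_eq_zero]
  have mm : ∀ x, x ∈ LinearMap.ker (G + 1) ↔ G x = -x := by
    intro x; simp [LinearMap.mem_ker, add_eq_zero_iff_eq_neg]
  have cp : ∀ x, G x = x → I 2 x = I 0 (I 1 x) := by
    intro x hx
    have h := congrArg (fun y => I 0 (I 1 y)) hx
    simp only [gA, sq, r10, map_neg, neg_neg] at h
    exact h
  have cm : ∀ x, G x = -x → I 2 x = -I 0 (I 1 x) := by
    intro x hx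
    have h := congrArg (fun y => I 0 (I 1 y)) hx
    simp only [gA, sq, r10, map_neg, neg_neg] at h
    exact h
  have p0 : ∀ x, Ip 0 x = (1 / 2 : ℝ) • (I 1 (I 2 x) + I 0 x) := by
    intro x; rw [hIp, hJ0]; rfl
  have p1 : ∀ x, Ip 1 x = (1 / 2 : ℝ) • (I 2 (I 0 x) + I 1 x) := by
    intro x; rw [hIp, hJ1]; rfl
  have p2 : ∀ x, Ip 2 x = (1 / 2 : ℝ) • (I 0 (I 1 x) + I 2 x) := by
    intro x; rw [hIp, hJ2]; rfl
  have m0 : ∀ x, Im 0 x = (1 / 2 : ℝ) • (I 1 (I 2 x) - I 0 x) := by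
    intro x; rw [hIm, hJ0]; rfl
  have m1 : ∀ x, Im 1 x = (1 / 2 : ℝ) • (I 2 (I 0 x) - I 1 x) := by
    intro x; rw [hIm, hJ1]; rfl
  have m2 : ∀ x, Im 2 x = (1 / 2 : ℝ) • (I 0 (I 1 x) - I 2 x) := by
    intro x; rw [hIm, hJ2]; rfl
  refine ⟨?_, ?_, ?_, ?_, ?_, ?_, ?_, ?_, ?_⟩
  · refine IsCompl.of_eq ?_ ?_
    · rw [eq_bot_iff]
      rintro x ⟨h1, h2⟩
      have h1 := (mp x).1 h1
      have h2 := (mm x).1 h2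
      have h3 : (2 : ℝ) • x = 0 := by
        rw [two_smul]; nth_rewrite 1 [← h1]; rw [h2]; simp
      simpa using h3
    · rw [eq_top_iff]
      intro x _
      refine Submodule.mem_sup.2 ⟨(1 / 2 : ℝ) • (x + G x), ?_, (1 / 2 : ℝ) • (x - G x), ?_, ?_⟩
      · rw [mp]; simp only [map_smul, map_add, gg]; module
      · rw [mm]; simp only [map_smul, map_sub, gg]; module
      · module
  · intro i A hA
    rw [mp] at hA ⊢
    have hc := cp A hA
    revert i
    simp only [Fin.forall_fin_succ, Fin.forall_fin_zero_pi, IsEmpty.forall_iff, and_true, Fin.succ_zero_eq_one, Fin.succ_one_eq_two]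
    refine ⟨?_, ?_, ?_⟩ <;> simp only [gA, sq, r10, r20, r21, hc, map_neg, map_smul, map_add, map_sub, neg_neg, p0, p1, p2, m0, m1, m2] <;> module
  · intro i A hA
    rw [mm] at hA
    have hc := cm A hA
    revert i
    simp only [Fin.forall_fin_succ, Fin.forall_fin_zero_pi, IsEmpty.forall_iff, and_true, Fin.succ_zero_eq_one, Fin.succ_one_eq_two]
    refine ⟨?_, ?_, ?_⟩ <;> simp only [sq, r10, r20, r21, hc, map_neg, map_smul, map_add, map_sub, neg_neg, p0, p1, p2, m0, m1, m2] <;> module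
  · intro i A hA
    rw [mm] at hA ⊢
    have hc := cm A hA
    revert i
    simp only [Fin.forall_fin_succ, Fin.forall_fin_zero_pi, IsEmpty.forall_iff, and_true, Fin.succ_zero_eq_one, Fin.succ_one_eq_two]
    refine ⟨?_, ?_, ?_⟩ <;> simp only [gA, sq, r10, r20, r21, hc, map_neg, map_smul, map_add, map_sub, neg_neg, p0, p1, p2, m0, m1, m2] <;> module
  · intro i A hA
    rw [mp] at hA
    have hc := cp A hA
    revert i
    simp only [Fin.forall_fin_succ, Fin.forall_fin_zero_pi, IsEmpty.forall_iff, and_true, Fin.succ_zero_eq_one, Fin.succ_one_eq_two]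
    refine ⟨?_, ?_, ?_⟩ <;> simp only [sq, r10, r20, r21, hc, map_neg, map_smul, map_add, map_sub, neg_neg, p0, p1, p2, m0, m1, m2] <;> module
  · intro i A hA
    rw [mp] at hA
    have hc := cp A hA
    revert i
    simp only [Fin.forall_fin_succ, Fin.forall_fin_zero_pi, IsEmpty.forall_iff, and_true, Fin.succ_zero_eq_one, Fin.succ_one_eq_two]
    refine ⟨?_, ?_, ?_⟩ <;> simp only [sq, r10, r20, r21, hc, map_neg, map_smul, map_add, map_sub, neg_neg, p0, p1, p2, m0, m1, m2] <;> module
  · intro i j hij A hA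
    rw [mp] at hA
    have hc := cp A hA
    rw [Fin.sum_univ_three]
    fin_cases i <;> fin_cases j <;> first | exact absurd rfl hij | skip
    all_goals
      simp [eps]
      simp only [sq, r10, r20, r21, hc, map_neg, map_smul, map_add, map_sub, neg_neg, p0, p1, p2, m0, m1, m2]
      module
  · intro i A hA
    rw [mm] at hA
    have hc := cm A hA
    revert i
    simp only [Fin.forall_fin_succ, Fin.forall_fin_zero_pi, IsEmpty.forall_iff, and_true, Fin.succ_zero_eq_one, Fin.succ_one_eq_two]
    refine ⟨?_, ?_, ?_⟩ <;> simp only [sq, r10, r20, r21, hc, map_neg, map_smul, map_add, map_sub, neg_neg, p0, p1, p2, m0, m1, m2] <;> module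
  · intro i j hij A hA
    rw [mm] at hA
    have hc := cm A hA
    rw [Fin.sum_univ_three]
    fin_cases i <;> fin_cases j <;> first | exact absurd rfl hij | skip
    all_goals
      simp [eps]
      simp only [sq, r10, r20, r21, hc, map_neg, map_smul, map_add, map_sub, neg_neg, p0, p1, p2, m0, m1, m2]
      module
end

section
/- Let (I₁,I₂,I₃) be a rank-3 Clifford triple on a real vector space E, with induced I_i^± and G^±, and let T = (t_{il}) and S = (s_{il}) be matrices in SO(3,ℝ). Define Î_i^+ := Σ_l t_{il} I_l^+ and Î_i^− := Σ_l s_{il} I_l^− for i = 1,2,3. Then the quadruples (Î₁^±, Î₂^±, Î₃^±, G^±) each satisfy the quaternion algebra: (1) Î_i^± Î_j^± = −δ_ij·G^± + Σ_k ε_{ijk} Î_k^±; and (2) G^± G^∓ = 0, G^± Î_i^∓ = 0, Î_i^± G^∓ = 0 and Î_i^± Î_j^∓ = 0, for all i,j ∈ {1,2,3}. -/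
open Matrix

theorem so3_cross (T : Matrix (Fin 3) (Fin 3) ℝ) (hT : Tᵀ * T = 1) (hTdet : T.det = 1) :
    (∀ i j, T i 0 * T j 0 + T i 1 * T j 1 + T i 2 * T j 2 = if i = j then 1 else 0) ∧
    (∀ i j, T i 1 * T j 2 - T i 2 * T j 1 = ∑ k, eps i j k * T k 0) ∧
    (∀ i j, T i 2 * T j 0 - T i 0 * T j 2 = ∑ k, eps i j k * T k 1) ∧
    (∀ i j, T i 0 * T j 1 - T i 1 * T j 0 = ∑ k, eps i j k * T k 2) := by
  have h1 : T * Tᵀ = 1 := mul_eq_one_comm.mp hT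
  have h2 : T.adjugate = Tᵀ := by
    have h3 : T * T.adjugate = 1 := by rw [Matrix.mul_adjugate, hTdet, one_smul]
    calc T.adjugate = (Tᵀ * T) * T.adjugate := by rw [hT, one_mul]
      _ = Tᵀ := by rw [mul_assoc, h3, mul_one]
  have h3 : ∀ i j, T.adjugate i j = T j i := fun i j => by rw [h2]; rfl
  rw [Matrix.adjugate_fin_three] at h3
  have a00 := h3 0 0
  have a01 := h3 0 1
  have a02 := h3 0 2
  have a10 := h3 1 0
  have a11 := h3 1 1
  have a12 := h3 1 2
  have a20 := h3 2 0
  have a21 := h3 2 1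
  have a22 := h3 2 2
  simp at a00 a01 a02 a10 a11 a12 a20 a21 a22
  refine ⟨fun i j => ?_, fun i j => ?_, fun i j => ?_, fun i j => ?_⟩
  · have := congrFun (congrFun h1 i) j
    rw [Matrix.mul_apply, Fin.sum_univ_three, Matrix.one_apply] at this
    simpa using this
  all_goals
    fin_cases i <;> fin_cases j <;> simp [eps, Fin.sum_univ_three] <;> linarith

theorem rot_mul {R : Type*} [Ring R] [Algebra ℝ R] (A B : Fin 3 → R) (g : R)
    (hA : ∀ i j, A i * A j = (if i = j then -g else 0) + ∑ k, eps i j k • A k)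
    (T : Matrix (Fin 3) (Fin 3) ℝ) (hT : Tᵀ * T = 1) (hTdet : T.det = 1)
    (hB : ∀ i, B i = ∑ l, T i l • A l) (i j : Fin 3) :
    B i * B j = (if i = j then -g else 0) + ∑ k, eps i j k • B k := by
  obtain ⟨h, h0, h1, h2⟩ := so3_cross T hT hTdet
  have e : B i * B j = (T i 0 * T j 0 + T i 1 * T j 1 + T i 2 * T j 2) • (-g)
      + (T i 1 * T j 2 - T i 2 * T j 1) • A 0 + (T i 2 * T j 0 - T i 0 * T j 2) • A 1
      + (T i 0 * T j 1 - T i 1 * T j 0) • A 2 := by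
    simp only [hB, Fin.sum_univ_three, add_mul, mul_add, smul_mul_assoc, mul_smul_comm, hA]
    simp [eps]
    module
  have e2 : (if i = j then (1:ℝ) else 0) • (-g) = if i = j then -g else 0 := by
    split_ifs <;> simp
  rw [e, h, h0, h1, h2, e2]
  simp only [hB, Fin.sum_univ_three]
  module

theorem base_rel {R : Type*} [Ring R] [Algebra ℝ R] (I J Ip Im : Fin 3 → R) (G Gp Gm : R)
    (hCl : ∀ i j, I i * I j + I j * I i = if i = j then (-2 : R) else 0)
    (hJ0 : J 0 = I 1 * I 2) (hJ1 : J 1 = I 2 * I 0) (hJ2 : J 2 = I 0 * I 1)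
    (hG : G = -(I 0 * I 1 * I 2))
    (hIp : ∀ i, Ip i = (1 / 2 : ℝ) • (J i + I i))
    (hIm : ∀ i, Im i = (1 / 2 : ℝ) • (J i - I i))
    (hGp : Gp = (1 / 2 : ℝ) • (1 + G))
    (hGm : Gm = (1 / 2 : ℝ) • (1 - G)) :
    (∀ i j, Ip i * Ip j = (if i = j then -Gp else 0) + ∑ k, eps i j k • Ip k) ∧
    (∀ i j, Im i * Im j = (if i = j then -Gm else 0) + ∑ k, eps i j k • Im k) ∧
    (Gp * Gm = 0 ∧ Gm * Gp = 0 ∧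
     (∀ i, Gp * Im i = 0) ∧ (∀ i, Gm * Ip i = 0) ∧
     (∀ i, Ip i * Gm = 0) ∧ (∀ i, Im i * Gp = 0) ∧
     (∀ i j, Ip i * Im j = 0) ∧ (∀ i j, Im i * Ip j = 0)) := by
  have sq : ∀ i, I i * I i = -1 := fun i => by
    have h := hCl i i
    rw [if_pos rfl] at h
    have h' : (2:ℝ) • (I i * I i) = (2:ℝ) • (-1 : R) := by
      rw [two_smul, two_smul, h]; norm_num
    exact smul_right_injective R (two_ne_zero : (2:ℝ) ≠ 0) h'
  have ac : ∀ i j, i ≠ j → I i * I j = -(I j * I i) := fun i j hij => by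
    have h := hCl i j
    rw [if_neg hij] at h
    exact eq_neg_of_add_eq_zero_left h
  have s' : ∀ i x, I i * (I i * x) = -x := fun i x => by rw [← mul_assoc, sq]; simp
  have r10 := ac 1 0 (by decide)
  have r20 := ac 2 0 (by decide)
  have r21 := ac 2 1 (by decide)
  have r10' : ∀ x, I 1 * (I 0 * x) = -(I 0 * (I 1 * x)) := fun x => by
    rw [← mul_assoc, r10]; simp [mul_assoc]
  have r20' : ∀ x, I 2 * (I 0 * x) = -(I 0 * (I 2 * x)) := fun x => by
    rw [← mul_assoc, r20]; simp [mul_assoc]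
  have r21' : ∀ x, I 2 * (I 1 * x) = -(I 1 * (I 2 * x)) := fun x => by
    rw [← mul_assoc, r21]; simp [mul_assoc]
  refine ⟨fun i j => ?_, fun i j => ?_, ?_, ?_, fun i => ?_, fun i => ?_, fun i => ?_, fun i => ?_,
    fun i j => ?_, fun i j => ?_⟩
  all_goals
    try fin_cases i
  all_goals
    try fin_cases j
  all_goals
    simp [eps, Fin.sum_univ_three, hIp, hIm, hGp, hGm, hG, hJ0, hJ1, hJ2, mul_add, add_mul,
      mul_sub, sub_mul, mul_assoc, sq, s', r10, r20, r21, r10', r20', r21']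
  all_goals
    try module

/-- the rotated endomorphisms `Î_i^+ = Σ_l t_{il} I_l^+` and
`Î_i^- = Σ_l s_{il} I_l^-` (for `T, S ∈ SO(3,ℝ)`) together with `G^±` each satisfy
the quaternion algebra, and the two sectors annihilate each other. -/
theorem rotated_quaternion_relations
    {E : Type*} [AddCommGroup E] [Module ℝ E]
    (I : Fin 3 → Module.End ℝ E)
    (hCl : ∀ i j, I i * I j + I j * I i = if i = j then (-2 : Module.End ℝ E) else 0)
    (J : Fin 3 → Module.End ℝ E)
    (hJ0 : J 0 = I 1 * I 2) (hJ1 : J 1 = I 2 * I 0) (hJ2 : J 2 = I 0 * I 1)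
    (G : Module.End ℝ E) (hG : G = -(I 0 * I 1 * I 2))
    (Ip Im : Fin 3 → Module.End ℝ E)
    (hIp : ∀ i, Ip i = (1 / 2 : ℝ) • (J i + I i))
    (hIm : ∀ i, Im i = (1 / 2 : ℝ) • (J i - I i))
    (Gp Gm : Module.End ℝ E)
    (hGp : Gp = (1 / 2 : ℝ) • (1 + G))
    (hGm : Gm = (1 / 2 : ℝ) • (1 - G))
    (T S : Matrix (Fin 3) (Fin 3) ℝ)
    (hT : Tᵀ * T = 1) (hTdet : T.det = 1)
    (hS : Sᵀ * S = 1) (hSdet : S.det = 1)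
    (Ihp Ihm : Fin 3 → Module.End ℝ E)
    (hIhp : ∀ i, Ihp i = ∑ l, T i l • Ip l)
    (hIhm : ∀ i, Ihm i = ∑ l, S i l • Im l) :
    -- (1) quaternion algebra in each sector
    (∀ i j, Ihp i * Ihp j = (if i = j then -Gp else 0) + ∑ k, eps i j k • Ihp k) ∧
    (∀ i j, Ihm i * Ihm j = (if i = j then -Gm else 0) + ∑ k, eps i j k • Ihm k) ∧
    -- (2) the two sectors annihilate each other
    (Gp * Gm = 0 ∧ Gm * Gp = 0 ∧
     (∀ i, Gp * Ihm i = 0) ∧ (∀ i, Gm * Ihp i = 0) ∧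
     (∀ i, Ihp i * Gm = 0) ∧ (∀ i, Ihm i * Gp = 0) ∧
     (∀ i j, Ihp i * Ihm j = 0) ∧ (∀ i j, Ihm i * Ihp j = 0)) := by
  obtain ⟨b1, b2, b3, b4, b5, b6, b7, b8, b9, b10⟩ :=
    base_rel I J Ip Im G Gp Gm hCl hJ0 hJ1 hJ2 hG hIp hIm hGp hGm
  refine ⟨rot_mul Ip Ihp Gp b1 T hT hTdet hIhp, rot_mul Im Ihm Gm b2 S hS hSdet hIhm, b3, b4,
    fun i => ?_, fun i => ?_, fun i => ?_, fun i => ?_, fun i j => ?_, fun i j => ?_⟩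
  all_goals
    simp only [hIhp, hIhm, Fin.sum_univ_three, mul_add, add_mul, smul_mul_assoc, mul_smul_comm,
      b5, b6, b7, b8, b9, b10, smul_zero, add_zero]
end

section
/- Let E be a real vector space equipped with an ℝ-bilinear bracket [·,·] and a symmetric bilinear form ⟨·,·⟩. Let (I₁,I₂,I₃) be a rank-3 Clifford triple on E such that each I_i is orthogonal (⟨I_iA, I_iB⟩ = ⟨A,B⟩ for all A,B ∈ E) and N(I_i,I_i) = 0 for i = 1,2,3. Let T = (t_{il}) and S = (s_{il}) be matrices in SO(3,ℝ), and define K_i := Σ_l (t_{il} I_l^+ + s_{il} I_l^−) for i = 1,2,3. Then: K_i² = −Id for each i; K_iK_j = −K_jK_i for i ≠ j (so (K₁,K₂,K₃) satisfies the rank-3 Clifford relations K_iK_j + K_jK_i = −2δ_ij·Id); each K_i is orthogonal, i.e. ⟨K_iA, K_iB⟩ = ⟨A,B⟩; and N(K_i,K_j) = 0 for all i,j = 1,2,3. -/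
open Matrix

section helpers

variable {E : Type*} [AddCommGroup E] [Module ℝ E] (br : E →ₗ[ℝ] E →ₗ[ℝ] E)

lemma Nij_symm (X Y : Module.End ℝ E) (A B : E) : Nij br X Y A B = Nij br Y X A B := by
  simp only [Nij]; module

lemma Nij_add_right (X Y Z : Module.End ℝ E) (A B : E) :
    Nij br X (Y + Z) A B = Nij br X Y A B + Nij br X Z A B := by
  simp only [Nij, LinearMap.add_apply, map_add]; module

lemma Nij_smul_right (c : ℝ) (X Y : Module.End ℝ E) (A B : E) :
    Nij br X (c • Y) A B = c • Nij br X Y A B := by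
  simp only [Nij, LinearMap.smul_apply, map_smul]; module

lemma Nij_add_left (X Y Z : Module.End ℝ E) (A B : E) :
    Nij br (Y + Z) X A B = Nij br Y X A B + Nij br Z X A B := by
  simp only [Nij, LinearMap.add_apply, map_add]; module

lemma Nij_smul_left (c : ℝ) (X Y : Module.End ℝ E) (A B : E) :
    Nij br (c • Y) X A B = c • Nij br Y X A B := by
  simp only [Nij, LinearMap.smul_apply, map_smul]; module

lemma end_lin_zero (X : Module.End ℝ E) {v : E} (h : v = 0) : X v = 0 := by
  rw [h, map_zero]

lemma Nij_anti (X Y : Module.End ℝ E) (hX : X * X = -1) (hY : Y * Y = -1)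
    (hXY : Y * X = -(X * Y))
    (h1 : ∀ A B, Nij br X X A B = 0) (h2 : ∀ A B, Nij br Y Y A B = 0) (A B : E) :
    Nij br X Y A B = 0 := by
  have x (v : E) : X (X v) = -v := by simpa using LinearMap.congr_fun hX v
  have y (v : E) : Y (Y v) = -v := by simpa using LinearMap.congr_fun hY v
  have yx (v : E) : Y (X v) = -X (Y v) := by simpa using LinearMap.congr_fun hXY v
  have e1 := h1 (X (Y A)) B
  have e2 := end_lin_zero (X * Y) (h2 (X A) (X B))
  have e3 := h1 A (X (Y B))
  have e4 := end_lin_zero (X * Y) (h2 A B)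
  have e5 := h2 A (X (Y B))
  have e6 := end_lin_zero Y (h1 (X (Y A)) (Y B))
  have e7 := end_lin_zero Y (h1 (X A) B)
  have e8 := h2 (X A) (Y B)
  simp only [Nij, Module.End.mul_apply, map_add, map_sub, map_smul, map_neg, x, y, yx,
    LinearMap.neg_apply, neg_neg] at *
  linear_combination (norm := module) (-1/4 : ℝ) • e1 + (1/4 : ℝ) • e2 - (1/4 : ℝ) • e3
    - (1/4 : ℝ) • e4 + (1/4 : ℝ) • e5 - (1/4 : ℝ) • e6 + (1/4 : ℝ) • e7 - (1/4 : ℝ) • e8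

lemma Nij_prod (X Y : Module.End ℝ E) (hX : X * X = -1) (hY : Y * Y = -1)
    (hXY : Y * X = -(X * Y))
    (h1 : ∀ A B, Nij br X X A B = 0) (h2 : ∀ A B, Nij br Y Y A B = 0) (A B : E) :
    Nij br (X * Y) (X * Y) A B = 0 := by
  have h3 := Nij_anti br X Y hX hY hXY h1 h2
  have x (v : E) : X (X v) = -v := by simpa using LinearMap.congr_fun hX v
  have y (v : E) : Y (Y v) = -v := by simpa using LinearMap.congr_fun hY v
  have yx (v : E) : Y (X v) = -X (Y v) := by simpa using LinearMap.congr_fun hXY v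
  have e1 := h2 A B
  have e2 := end_lin_zero Y (h1 A (Y B))
  have e3 := end_lin_zero Y (h3 (X (Y A)) (Y B))
  simp only [Nij, Module.End.mul_apply, map_add, map_sub, map_smul, map_neg, x, y, yx,
    LinearMap.neg_apply, neg_neg] at *
  linear_combination (norm := module) e1 - e2 + (2 : ℝ) • e3

lemma Nij_cyc (X Y Z : Module.End ℝ E) (hX : X * X = -1) (hY : Y * Y = -1) (hZ : Z * Z = -1)
    (hXY : Y * X = -(X * Y)) (hXZ : Z * X = -(X * Z)) (hYZ : Z * Y = -(Y * Z))
    (h1 : ∀ A B, Nij br X X A B = 0) (h13 : ∀ A B, Nij br X Z A B = 0)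
    (h23 : ∀ A B, Nij br Y Z A B = 0) (A B : E) :
    Nij br X (Y * Z) A B = Nij br Y (Z * X) A B := by
  have x (v : E) : X (X v) = -v := by simpa using LinearMap.congr_fun hX v
  have y (v : E) : Y (Y v) = -v := by simpa using LinearMap.congr_fun hY v
  have z (v : E) : Z (Z v) = -v := by simpa using LinearMap.congr_fun hZ v
  have yx (v : E) : Y (X v) = -X (Y v) := by simpa using LinearMap.congr_fun hXY v
  have zx (v : E) : Z (X v) = -X (Z v) := by simpa using LinearMap.congr_fun hXZ v
  have zy (v : E) : Z (Y v) = -Y (Z v) := by simpa using LinearMap.congr_fun hYZ v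
  have e1 := end_lin_zero X (h1 A (Y (Z B)))
  have e2 := end_lin_zero X (h1 (X (Z A)) (X (Y B)))
  have e3 := end_lin_zero X (h13 A (X (Y B)))
  have e4 := end_lin_zero X (h13 (Y A) (X B))
  have e5 := end_lin_zero X (h23 (X A) (X B))
  have e6 := end_lin_zero Y (h13 (X A) (X B))
  simp only [Nij, Module.End.mul_apply, map_add, map_sub, map_smul, map_neg, x, y, z, yx, zx, zy,
    LinearMap.neg_apply, neg_neg] at *
  linear_combination (norm := module) (1/2 : ℝ) • e1 - (1/2 : ℝ) • e2 - e3 - e4 - e5 - e6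

/-- Algebraic relations. -/
lemma anti_words (X Y Z : Module.End ℝ E) (hX : X * X = -1) (hY : Y * Y = -1) (hZ : Z * Z = -1)
    (hXY : Y * X = -(X * Y)) (hXZ : Z * X = -(X * Z)) (hYZ : Z * Y = -(Y * Z)) :
    (Y * Z) * (Y * Z) = -1 ∧ (Z * X) * (Y * Z) = -((Y * Z) * (Z * X)) ∧
    X * (Y * Z) = (Y * Z) * X ∧ (Z * X) * X = -(X * (Z * X)) ∧ (Y * Z) * Y = -(Y * (Y * Z)) ∧
    Y * (Z * X) = X * (Y * Z) ∧ (X * Y) * X = -(X * (X * Y)) := by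
  have x (v : E) : X (X v) = -v := by simpa using LinearMap.congr_fun hX v
  have y (v : E) : Y (Y v) = -v := by simpa using LinearMap.congr_fun hY v
  have z (v : E) : Z (Z v) = -v := by simpa using LinearMap.congr_fun hZ v
  have yx (v : E) : Y (X v) = -X (Y v) := by simpa using LinearMap.congr_fun hXY v
  have zx (v : E) : Z (X v) = -X (Z v) := by simpa using LinearMap.congr_fun hXZ v
  have zy (v : E) : Z (Y v) = -Y (Z v) := by simpa using LinearMap.congr_fun hYZ v
  refine ⟨?_, ?_, ?_, ?_, ?_, ?_, ?_⟩ <;> ext v <;>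
    simp only [Module.End.mul_apply, map_neg, x, y, z, yx, zx, zy, LinearMap.neg_apply, neg_neg,
      Module.End.one_apply]

end helpers

/-- Theorem 1.2 of the paper: the rank-3 Clifford rotation
`K_i = Σ_l (t_{il} I_l^+ + s_{il} I_l^-)` of a rank-3 generalized Clifford
structure is again a rank-3 generalized Clifford structure: the `K_i` satisfy the
Clifford relations, are orthogonal, and all the Nijenhuis concomitants
`N(K_i, K_j)` vanish. -/
theorem clifford_rotation_is_clifford
    {E : Type*} [AddCommGroup E] [Module ℝ E]
    (br : E →ₗ[ℝ] E →ₗ[ℝ] E)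
    (P : E →ₗ[ℝ] E →ₗ[ℝ] ℝ) (hPsymm : ∀ A B : E, P A B = P B A)
    (I : Fin 3 → Module.End ℝ E)
    (hCl : ∀ i j, I i * I j + I j * I i = if i = j then (-2 : Module.End ℝ E) else 0)
    (hOrth : ∀ i, ∀ A B : E, P (I i A) (I i B) = P A B)
    (hInt : ∀ i, ∀ A B : E, Nij br (I i) (I i) A B = 0)
    (J : Fin 3 → Module.End ℝ E)
    (hJ0 : J 0 = I 1 * I 2) (hJ1 : J 1 = I 2 * I 0) (hJ2 : J 2 = I 0 * I 1)
    (Ip Im : Fin 3 → Module.End ℝ E)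
    (hIp : ∀ i, Ip i = (1 / 2 : ℝ) • (J i + I i))
    (hIm : ∀ i, Im i = (1 / 2 : ℝ) • (J i - I i))
    (T S : Matrix (Fin 3) (Fin 3) ℝ)
    (hT : Tᵀ * T = 1) (hTdet : T.det = 1)
    (hS : Sᵀ * S = 1) (hSdet : S.det = 1)
    (K : Fin 3 → Module.End ℝ E)
    (hK : ∀ i, K i = ∑ l, (T i l • Ip l + S i l • Im l)) :
    -- K_i² = -Id
    (∀ i, K i * K i = -1) ∧
    -- anticommutation for i ≠ j
    (∀ i j, i ≠ j → K i * K j = -(K j * K i)) ∧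
    -- the rank-3 Clifford relations
    (∀ i j, K i * K j + K j * K i = if i = j then (-2 : Module.End ℝ E) else 0) ∧
    -- orthogonality
    (∀ i, ∀ A B : E, P (K i A) (K i B) = P A B) ∧
    -- simultaneous integrability
    (∀ i j, ∀ A B : E, Nij br (K i) (K j) A B = 0) := by
  have hsq : ∀ i, I i * I i = -1 := by
    intro i
    have h := hCl i i
    rw [if_pos rfl] at h
    ext v
    have h' := LinearMap.congr_fun h v
    have e : (-2 : Module.End ℝ E) v = (-2 : ℝ) • v := by
      have : (-2 : Module.End ℝ E) = (-1) + (-1) := by norm_num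
      rw [this]; simp only [LinearMap.add_apply, LinearMap.neg_apply, Module.End.one_apply]; module
    rw [e] at h'
    simp only [LinearMap.add_apply, LinearMap.neg_apply, Module.End.one_apply] at h' ⊢
    linear_combination (norm := module) (1/2 : ℝ) • h'
  have hanti : ∀ i j, i ≠ j → I j * I i = -(I i * I j) := by
    intro i j hij
    have h := hCl i j
    rw [if_neg hij] at h
    exact (neg_eq_of_add_eq_zero_right h).symm
  have hJ : ∀ i, J i = I (i + 1) * I (i + 2) := by
    intro i; fin_cases i
    · exact hJ0
    · exact hJ1
    · exact hJ2
  have w : ∀ i : Fin 3, _ := fun i => anti_words (I i) (I (i+1)) (I (i+2)) (hsq _) (hsq _) (hsq _)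
    (hanti _ _ (by revert i; decide)) (hanti _ _ (by revert i; decide))
    (hanti _ _ (by revert i; decide))
  have i11 : ∀ i : Fin 3, i + 1 + 1 = i + 2 := by decide
  have i12 : ∀ i : Fin 3, i + 1 + 2 = i := by decide
  have i21 : ∀ i : Fin 3, i + 2 + 1 = i := by decide
  have i22 : ∀ i : Fin 3, i + 2 + 2 = i + 1 := by decide
  have hJ' : ∀ i, J (i + 1) = I (i + 2) * I i := fun i => by rw [hJ, i11, i12]
  have hJ'' : ∀ i, J (i + 2) = I i * I (i + 1) := fun i => by rw [hJ, i21, i22]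
  -- algebra
  have JJ : ∀ i, J i * J i = -1 := fun i => by rw [hJ]; exact (w i).1
  have JJ1 : ∀ i, J (i + 1) * J i = -(J i * J (i + 1)) := fun i => by
    rw [hJ', hJ]; exact (w i).2.1
  have IJc : ∀ i, I i * J i = J i * I i := fun i => by rw [hJ]; exact (w i).2.2.1
  have JI1 : ∀ i, J (i + 1) * I i = -(I i * J (i + 1)) := fun i => by
    rw [hJ']; exact (w i).2.2.2.1
  have JI0 : ∀ i, J i * I (i + 1) = -(I (i + 1) * J i) := fun i => by
    rw [hJ]; exact (w i).2.2.2.2.1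
  have IJe : ∀ i, I (i + 1) * J (i + 1) = I i * J i := fun i => by
    rw [hJ', hJ]; exact (w i).2.2.2.2.2.1
  -- concomitants
  have nII : ∀ i j A B, Nij br (I i) (I j) A B = 0 := by
    intro i j
    rcases eq_or_ne i j with rfl | hij
    · exact hInt i
    · exact Nij_anti br _ _ (hsq _) (hsq _) (hanti _ _ hij) (hInt _) (hInt _)
  have nJ : ∀ i A B, Nij br (J i) (J i) A B = 0 := by
    intro i; rw [hJ]
    exact Nij_prod br _ _ (hsq _) (hsq _) (hanti _ _ (by revert i; decide)) (hInt _) (hInt _)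
  have nJJ1 : ∀ i A B, Nij br (J i) (J (i + 1)) A B = 0 := fun i =>
    Nij_anti br _ _ (JJ _) (JJ _) (JJ1 i) (nJ _) (nJ _)
  have nIJ1 : ∀ i A B, Nij br (I i) (J (i + 1)) A B = 0 := fun i =>
    Nij_anti br _ _ (hsq _) (JJ _) (JI1 i) (hInt _) (nJ _)
  have nIJ0 : ∀ i A B, Nij br (I (i + 1)) (J i) A B = 0 := fun i =>
    Nij_anti br _ _ (hsq _) (JJ _) (JI0 i) (hInt _) (nJ _)
  have nIJe : ∀ i A B, Nij br (I i) (J i) A B = Nij br (I (i + 1)) (J (i + 1)) A B := fun i => by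
    rw [hJ', hJ]
    exact Nij_cyc br _ _ _ (hsq _) (hsq _) (hsq _)
      (hanti _ _ (by revert i; decide)) (hanti _ _ (by revert i; decide))
      (hanti _ _ (by revert i; decide)) (hInt _) (nII _ _) (nII _ _)
  -- coefficients
  have hT' : T * Tᵀ = 1 := mul_eq_one_comm.mp hT
  have hS' : S * Sᵀ = 1 := mul_eq_one_comm.mp hS
  have tT : ∀ i j, T i 0 * T j 0 + T i 1 * T j 1 + T i 2 * T j 2 = if i = j then 1 else 0 := by
    intro i j
    have := congrFun (congrFun hT' i) j
    simpa [Matrix.mul_apply, Fin.sum_univ_three, Matrix.one_apply] using this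
  have tS : ∀ i j, S i 0 * S j 0 + S i 1 * S j 1 + S i 2 * S j 2 = if i = j then 1 else 0 := by
    intro i j
    have := congrFun (congrFun hS' i) j
    simpa [Matrix.mul_apply, Fin.sum_univ_three, Matrix.one_apply] using this
  obtain ⟨a, ha⟩ : ∃ a : Fin 3 → Fin 3 → ℝ, ∀ i l, a i l = (T i l - S i l) / 2 :=
    ⟨_, fun _ _ => rfl⟩
  obtain ⟨b, hb⟩ : ∃ b : Fin 3 → Fin 3 → ℝ, ∀ i l, b i l = (T i l + S i l) / 2 :=
    ⟨_, fun _ _ => rfl⟩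
  have hKab : ∀ i, K i = a i 0 • I 0 + a i 1 • I 1 + a i 2 • I 2
      + (b i 0 • J 0 + b i 1 • J 1 + b i 2 • J 2) := by
    intro i
    rw [hK]
    simp only [Fin.sum_univ_three, hIp, hIm, ha, hb]
    module
  have cd : ∀ i j, a i 0 * a j 0 + a i 1 * a j 1 + a i 2 * a j 2
      + (b i 0 * b j 0 + b i 1 * b j 1 + b i 2 * b j 2) = if i = j then 1 else 0 := by
    intro i j
    simp only [ha, hb]
    linear_combination (1/2) * tT i j + (1/2) * tS i j
  have co : ∀ i j, a i 0 * b j 0 + a i 1 * b j 1 + a i 2 * b j 2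
      + (b i 0 * a j 0 + b i 1 * a j 1 + b i 2 * a j 2) = 0 := by
    intro i j
    simp only [ha, hb]
    linear_combination (1/2) * tT i j - (1/2) * tS i j
  have two1 : (2 : Module.End ℝ E) = (2 : ℝ) • 1 := by
    rw [two_smul, one_add_one_eq_two]
  have hKK : ∀ i j, K i * K j + K j * K i = if i = j then (-2 : Module.End ℝ E) else 0 := by
    intro i j
    have key : K i * K j + K j * K i = (-2 * (if i = j then 1 else 0 : ℝ)) • 1 := by
      rw [← cd i j]
      have g1 := IJe 0
      have g2 := IJe 1
      have A01 := hanti 0 1 (by decide)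
      have A02 := hanti 0 2 (by decide)
      have A12 := hanti 1 2 (by decide)
      have B01 := JJ1 0
      have B12 := JJ1 1
      have B20 := JJ1 2
      have C0 := IJc 0
      have C1 := IJc 1
      have C2 := IJc 2
      have D0 := JI1 0
      have D1 := JI1 1
      have D2 := JI1 2
      have F0 := JI0 0
      have F1 := JI0 1
      have F2 := JI0 2
      simp only [zero_add, show (1 : Fin 3) + 1 = 2 from rfl, show (2 : Fin 3) + 1 = 0 from rfl]
        at g1 g2 B01 B12 B20 D0 D1 D2 F0 F1 F2
      rw [g1] at g2
      rw [g1] at C1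
      rw [g2] at C2
      rw [hKab i, hKab j]
      simp only [mul_add, add_mul, smul_mul_assoc, mul_smul_comm, hsq, JJ, A01, A02, A12,
        B01, B12, B20, ← C0, ← C1, ← C2, g1, g2, D0, D1, D2, F0, F1, F2]
      have h0 := congrArg (fun c : ℝ => c • (I 0 * J 0)) (co i j)
      simp only [zero_smul] at h0
      linear_combination (norm := module) (2 : ℝ) • h0
    rw [key]
    split_ifs
    · rw [two1]; module
    · module
  have hK2 : ∀ i, K i * K i = -1 := by
    intro i
    have h := hKK i i
    rw [if_pos rfl, two1] at h
    linear_combination (norm := module) (1/2 : ℝ) • h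
  refine ⟨hK2, ?_, hKK, ?_, ?_⟩
  · intro i j hij
    have h := hKK i j
    rw [if_neg hij] at h
    exact eq_neg_of_add_eq_zero_left h
  · have skI : ∀ i A B, P (I i A) B = - P A (I i B) := by
      intro i A B
      have h := hOrth i A (I i B)
      have e : I i (I i B) = -B := by simpa using LinearMap.congr_fun (hsq i) B
      rw [e, map_neg] at h
      linarith
    have skJ : ∀ i A B, P (J i A) B = - P A (J i B) := by
      intro i A B
      have e : I (i+2) (I (i+1) B) = - (I (i+1) (I (i+2) B)) := by
        simpa using LinearMap.congr_fun (hanti (i+1) (i+2) (by revert i; decide)) B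
      rw [hJ, Module.End.mul_apply, Module.End.mul_apply, skI, skI, e, map_neg, neg_neg]
    intro i A B
    have e : K i (K i B) = -B := by simpa using LinearMap.congr_fun (hK2 i) B
    have sk : P (K i A) (K i B) = - P A (K i (K i B)) := by
      generalize K i B = C
      rw [hKab i]
      simp only [LinearMap.add_apply, LinearMap.smul_apply, map_add, map_smul, skI, skJ,
        smul_eq_mul]
      ring
    rw [sk, e, map_neg, neg_neg]
  · intro i j A B
    have g1 := nIJe 0 A B
    have g2 := nIJe 1 A B
    have B01 := nJJ1 0 A B
    have B12 := nJJ1 1 A B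
    have B20 := nJJ1 2 A B
    have D0 := nIJ1 0 A B
    have D1 := nIJ1 1 A B
    have D2 := nIJ1 2 A B
    have F0 := nIJ0 0 A B
    have F1 := nIJ0 1 A B
    have F2 := nIJ0 2 A B
    simp only [zero_add, show (1 : Fin 3) + 1 = 2 from rfl, show (2 : Fin 3) + 1 = 0 from rfl]
      at g1 g2 B01 B12 B20 D0 D1 D2 F0 F1 F2
    have B10 := (Nij_symm br _ _ A B).trans B01
    have B21 := (Nij_symm br _ _ A B).trans B12
    have B02 := (Nij_symm br _ _ A B).trans B20
    have sJI : ∀ p q, Nij br (J p) (I q) A B = Nij br (I q) (J p) A B :=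
      fun p q => Nij_symm br _ _ A B
    rw [hKab i, hKab j]
    simp only [Nij_add_left, Nij_add_right, Nij_smul_left, Nij_smul_right, nII, nJ, sJI,
      B01, B12, B20, B10, B21, B02, D0, D1, D2, F0, F1, F2, g1, g2]
    have h0 := congrArg (fun c : ℝ => c • Nij br (I 2) (J 2) A B) (co i j)
    simp only [zero_smul] at h0
    linear_combination (norm := module) h0
end
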